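/- arXiv:2402.02538 — 2 statements merged into one kernel-verified Lean document; each statement's English description precedes it below -/
import Mathlib

section
/- For every integer n ≥ 4 and every i ∈ [n], |VPF_{n,(i)}| = |VPF_{n-1}| + (n−i)·|VPF_{n-2}| + Σ_{ℓ=i}^{n-2} (ℓ+1−i)·|VPF_{n-2,(ℓ)}|. -/
/-- One car with (1-indexed) preference `p` attempts to park on a one-way street with
spots `1,…,n` under the `k`-vacillating rule, given the set `occ` of occupied spots:
it parks in spot `p` if unoccupied; otherwise in spot `p - k` if `p - k ≥ 1` and it is
unoccupied; otherwise in spot `p + k` if `p + k ≤ n` and it is unoccupied; otherwise it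
fails to park (`none`). -/
def parkStep (n k : ℕ) (occ : Finset ℕ) (p : ℕ) : Option ℕ :=
  if p ∉ occ then some p
  else if k < p ∧ p - k ∉ occ then some (p - k)
  else if p + k ≤ n ∧ p + k ∉ occ then some (p + k)
  else none

/-- Park the cars whose preference list is given, in order, under the `k`-vacillating
rule on a street with spots `1,…,n`, starting from occupied set `occ`.  Returns the list
of spots occupied by the cars (in the order the cars arrive), or `none` if some car
fails to park. -/
def parkAssign (n k : ℕ) (occ : Finset ℕ) : List ℕ → Option (List ℕ)
  | [] => some []
  | p :: ps =>
    match parkStep n k occ p with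
    | none => none
    | some s => (parkAssign n k (insert s occ) ps).map (s :: ·)

/-- The 1-indexed preference list in `[n]^m` associated to `α : Fin m → Fin n`
(car `i+1` prefers spot `α i + 1`). -/
def prefList {m n : ℕ} (α : Fin m → Fin n) : List ℕ :=
  List.ofFn fun i => (α i : ℕ) + 1

/-- The set of `k`-vacillating parking functions of length `n`:
preference lists in `[n]^n` (encoded as `Fin n → Fin n`) for which all `n` cars park. -/
def VPFk (n k : ℕ) : Finset (Fin n → Fin n) :=
  Finset.univ.filter fun α => (parkAssign n k ∅ (prefList α)).isSome

/-- The set of vacillating parking functions of length `n` (the case `k = 1`). -/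
def VPF (n : ℕ) : Finset (Fin n → Fin n) := VPFk n 1

/-- The (1-indexed) spot occupied by the (1-indexed) car `i` when the cars with
preference list `α` park under the vacillating (`k = 1`) rule. -/
def spotOfCar (n : ℕ) (α : Fin n → Fin n) (i : ℕ) : Option ℕ :=
  (parkAssign n 1 ∅ (prefList α)).bind fun l => l[i-1]?

/-- The (1-indexed) preferred spot of the (1-indexed) car `i`. -/
def prefOfCar (n : ℕ) (α : Fin n → Fin n) (i : ℕ) : Option ℕ :=
  (prefList α)[i-1]?

/-- `VPF_{n,i}`: vacillating parking functions of length `n` in which spot `n` is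
occupied by car `i`. -/
def VPF_i (n i : ℕ) : Finset (Fin n → Fin n) :=
  (VPF n).filter fun α => spotOfCar n α i = some n

/-- `VPF_{n,(i)}`: vacillating parking functions of length `n` in which car `i`
prefers spot `n` and parks in spot `n`. -/
def VPF_paren (n i : ℕ) : Finset (Fin n → Fin n) :=
  (VPF n).filter fun α => prefOfCar n α i = some n ∧ spotOfCar n α i = some n

/-- `VPF_{n,[i]}`: vacillating parking functions of length `n` in which car `i`
prefers spot `n - 1` and parks in spot `n`. -/
def VPF_bracket (n i : ℕ) : Finset (Fin n → Fin n) :=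
  (VPF n).filter fun α => prefOfCar n α i = some (n-1) ∧ spotOfCar n α i = some n

/-!
If car `i` prefers and gets the last spot `m + 1`, then any other car preferring `m + 1` must find
it occupied and back into spot `m`; hence there is at most one such car `j`, and `j > i`. Deleting
car `i` gives an arbitrary element of `VPF_m` if there is no such `j`; if there is, also moving its
preference down to `m` gives an arbitrary element of `VPF_{m,(j-1)}`. Thus
`|VPF_{m+1,(i)}| = |VPF_m| + ∑_{j=i}^{m} |VPF_{m,(j)}|`. Apply this recurrence twice and
interchange the two sums.
-/

/-- The spots occupied when car `c` arrives, if those in `occ` are occupied from the start and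
each car `d` parks in spot `g d`. -/
def occupiedBefore {m : ℕ} (occ : Finset ℕ) (g : Fin m → ℕ) (c : Fin m) : Finset ℕ :=
  occ ∪ (Finset.Iio c).image g

/-- The outcome of parking cars with preferences `f` on a street with spots `1,…,n`, of which those
in `occ` are already occupied: car `c` parks in spot `g c`. In contrast to `parkAssign`, cars are
indexed by `Fin m`, so that a single car can be removed with `Fin.removeNth`. -/
def IsOutcome (n k : ℕ) {m : ℕ} (occ : Finset ℕ) (f g : Fin m → ℕ) : Prop :=
  ∀ c, parkStep n k (occupiedBefore occ g c) (f c) = some (g c)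

section ParkStep

variable {n k p s : ℕ} {occ occ' : Finset ℕ}

theorem notMem_of_parkStep_eq_some (h : parkStep n k occ p = some s) : s ∉ occ := by
  unfold parkStep at h
  grind

theorem mem_Icc_of_parkStep_eq_some (hp : p ∈ Finset.Icc 1 n) (h : parkStep n k occ p = some s) :
    s ∈ Finset.Icc 1 n := by
  rw [Finset.mem_Icc] at hp ⊢
  unfold parkStep at h
  grind

theorem parkStep_eq_some_self_iff : parkStep n k occ p = some p ↔ p ∉ occ := by
  unfold parkStep
  grind

theorem parkStep_succ_eq_some_iff (hocc : ∀ r ≤ n, r ∈ occ' ↔ r ∈ occ) (hp : p ≤ n) (hs : s ≤ n) :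
    parkStep (n + 1) k occ' p = some s ↔ parkStep n k occ p = some s := by
  unfold parkStep
  grind

theorem parkStep_self_eq_some_iff_of_lt (hs : s < n) :
    parkStep n k occ n = some s ↔ n ∈ occ ∧ n - k ∉ occ ∧ k < n ∧ s = n - k := by
  unfold parkStep
  grind

-- A car that finds its preferred spot `n + 1` occupied backs into `n`, as if it had preferred `n`.
theorem parkStep_succ_eq_some_iff_min (hocc : ∀ r ≤ n, r ∈ occ' ↔ r ∈ occ) (hp : p ≤ n + 1)
    (hs : s ∈ Finset.Icc 1 n) :
    parkStep (n + 1) 1 occ' p = some s ↔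
      parkStep n 1 occ (min p n) = some s ∧ (p = n + 1 → s = n ∧ n + 1 ∈ occ') := by
  obtain ⟨hs1, hsn⟩ := Finset.mem_Icc.1 hs
  rcases hp.lt_or_eq with hp | rfl
  · have hpn : p ≤ n := Nat.lt_succ_iff.1 hp
    simp [parkStep_succ_eq_some_iff hocc hpn hsn, hpn, hp.ne]
  · have hfree : parkStep n 1 occ n = some n ↔ n ∉ occ' := by
      rw [parkStep_eq_some_self_iff, hocc n le_rfl]
    rw [parkStep_self_eq_some_iff_of_lt (Nat.lt_add_one_of_le hsn), Nat.add_sub_cancel,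
      min_eq_right n.le_succ]
    grind

end ParkStep

theorem mem_occupiedBefore_succAbove {m : ℕ} {occ : Finset ℕ} {g : Fin (m + 1) → ℕ}
    (p : Fin (m + 1)) (c : Fin m) {r : ℕ} :
    r ∈ occupiedBefore occ g (p.succAbove c) ↔
      r ∈ occupiedBefore occ (p.removeNth g) c ∨ p ≤ c.castSucc ∧ r = g p := by
  simp only [occupiedBefore, Finset.mem_union, Finset.mem_image, Finset.mem_Iio,
    Fin.exists_iff_succAbove p, Fin.succAbove_lt_succAbove_iff, Fin.lt_succAbove_iff_le_castSucc,
    Fin.removeNth_apply, eq_comm (a := r)]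
  grind

namespace IsOutcome

variable {n k m : ℕ} {occ : Finset ℕ} {f g : Fin m → ℕ}

theorem notMem (h : IsOutcome n k occ f g) (c : Fin m) : g c ∉ occupiedBefore occ g c :=
  notMem_of_parkStep_eq_some (h c)

theorem ne_of_lt (h : IsOutcome n k occ f g) {c d : Fin m} (hcd : c < d) : g c ≠ g d := by
  intro heq
  refine h.notMem d (Finset.mem_union_right _ ?_)
  exact Finset.mem_image.2 ⟨c, Finset.mem_Iio.2 hcd, heq⟩

theorem injective (h : IsOutcome n k occ f g) : Function.Injective g :=
  Function.Injective.of_lt_imp_ne fun _ _ => h.ne_of_lt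

theorem mem_Icc (h : IsOutcome n k occ f g) {c : Fin m} (hc : f c ∈ Finset.Icc 1 n) :
    g c ∈ Finset.Icc 1 n :=
  mem_Icc_of_parkStep_eq_some hc (h c)

end IsOutcome

section IsOutcome

variable {n k m : ℕ} {occ : Finset ℕ}

theorem isOutcome_iff_head_tail {f g : Fin (m + 1) → ℕ} :
    IsOutcome n k occ f g ↔
      parkStep n k occ (f 0) = some (g 0) ∧
        IsOutcome n k (insert (g 0) occ) (Fin.tail f) (Fin.tail g) := by
  have before_zero : occupiedBefore occ g 0 = occ := by
    simp [occupiedBefore, ← bot_eq_zero]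
  have before_succ (c : Fin m) :
      occupiedBefore occ g c.succ = occupiedBefore (insert (g 0) occ) (Fin.tail g) c := by
    ext r
    rw [← Fin.succAbove_zero_apply, mem_occupiedBefore_succAbove, Fin.removeNth_zero]
    simp only [occupiedBefore, Finset.mem_union, Finset.mem_insert, Fin.zero_le, true_and]
    tauto
  simp only [IsOutcome, Fin.forall_fin_succ, before_zero, before_succ, Fin.tail]

theorem parkAssign_ofFn_eq_some_iff {f : Fin m → ℕ} {l : List ℕ} :
    parkAssign n k occ (List.ofFn f) = some l ↔ ∃ g, IsOutcome n k occ f g ∧ List.ofFn g = l := by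
  induction m generalizing occ l with
  | zero => simp [parkAssign, IsOutcome]
  | succ m ih =>
    simp only [Fin.exists_fin_succ_pi, isOutcome_iff_head_tail, Fin.cons_zero,
      List.ofFn_succ, Fin.cons_succ, Fin.tail_def, parkAssign]
    cases parkStep n k occ (f 0) with
    | none => simp
    | some s =>
      simp only [Option.map_eq_some_iff, ih, Option.some_inj]
      grind

theorem isOutcome_iff_removeNth {f g : Fin (m + 1) → ℕ} (p : Fin (m + 1)) (hocc : n + 1 ∉ occ)
    (hfp : f p = n + 1) (hgp : g p = n + 1) (hf : ∀ c, p.removeNth f c ≤ n + 1)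
    (hg : ∀ c, p.removeNth g c ∈ Finset.Icc 1 n) :
    IsOutcome (n + 1) 1 occ f g ↔
      IsOutcome n 1 occ (fun c => min (p.removeNth f c) n) (p.removeNth g) ∧
        ∀ c, p.removeNth f c = n + 1 → p.removeNth g c = n ∧ p ≤ c.castSucc := by
  have hg_ne (c : Fin m) : g (p.succAbove c) ≠ n + 1 := fun h => by
    simpa [Fin.removeNth_apply, h] using hg c
  have last_notMem (c : Fin m) : n + 1 ∉ occupiedBefore occ (p.removeNth g) c := by
    simp [occupiedBefore, Fin.removeNth_apply, hocc, hg_ne]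
  have hp : parkStep (n + 1) 1 (occupiedBefore occ g p) (f p) = some (g p) := by
    rw [hfp, hgp, parkStep_eq_some_self_iff]
    simp [occupiedBefore, hocc, Fin.exists_iff_succAbove p, hg_ne]
  have hstep (c : Fin m) :
      parkStep (n + 1) 1 (occupiedBefore occ g (p.succAbove c)) (f (p.succAbove c)) =
          some (g (p.succAbove c)) ↔
        parkStep n 1 (occupiedBefore occ (p.removeNth g) c) (min (p.removeNth f c) n) =
            some (p.removeNth g c) ∧
          (p.removeNth f c = n + 1 → p.removeNth g c = n ∧ p ≤ c.castSucc) := by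
    have hsame (r : ℕ) (hr : r ≤ n) : r ∈ occupiedBefore occ g (p.succAbove c) ↔
        r ∈ occupiedBefore occ (p.removeNth g) c := by
      simp [mem_occupiedBefore_succAbove, hgp, (Nat.lt_succ_of_le hr).ne]
    have hlast : n + 1 ∈ occupiedBefore occ g (p.succAbove c) ↔ p ≤ c.castSucc := by
      simp [mem_occupiedBefore_succAbove, hgp, last_notMem]
    rw [← hlast]
    exact parkStep_succ_eq_some_iff_min hsame (hf c) (hg c)
  simp only [IsOutcome, Fin.forall_iff_succAbove p, hp, true_and, hstep, forall_and]

end IsOutcome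

section Membership

variable {n k m : ℕ}

theorem mem_VPFk_iff {α : Fin n → Fin n} :
    α ∈ VPFk n k ↔ ∃ g, IsOutcome n k ∅ (fun c => (α c : ℕ) + 1) g := by
  rw [VPFk, Finset.mem_filter]
  simp [prefList, Option.isSome_iff_exists, parkAssign_ofFn_eq_some_iff]

theorem mem_VPF_paren_iff {α : Fin n → Fin n} {p : Fin n} :
    α ∈ VPF_paren n (p + 1) ↔
      ∃ g, IsOutcome n 1 ∅ (fun c => (α c : ℕ) + 1) g ∧ (α p : ℕ) + 1 = n ∧ g p = n := by
  have hpref : prefOfCar n α (p + 1) = some ((α p : ℕ) + 1) := by simp [prefOfCar, prefList]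
  have hspot : spotOfCar n α (p + 1) = some n ↔
      ∃ g, IsOutcome n 1 ∅ (fun c => (α c : ℕ) + 1) g ∧ g p = n := by
    simp [spotOfCar, prefList, Option.bind_eq_some_iff, parkAssign_ofFn_eq_some_iff]
  rw [VPF_paren, Finset.mem_filter, hpref, hspot, VPF, mem_VPFk_iff, Option.some_inj]
  grind

theorem mem_VPF_paren_succ_iff {α : Fin (m + 1) → Fin (m + 1)} {p : Fin (m + 1)} :
    α ∈ VPF_paren (m + 1) (p + 1) ↔
      α p = Fin.last m ∧
        ∃ g, IsOutcome m 1 ∅ (fun c => min ((p.removeNth α c : ℕ) + 1) m) g ∧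
          ∀ c, p.removeNth α c = Fin.last m → g c = m ∧ p ≤ c.castSucc := by
  have pref_eq (c : Fin (m + 1)) : (α c : ℕ) + 1 = m + 1 ↔ α c = Fin.last m := by
    rw [Nat.add_right_cancel_iff, Fin.ext_iff, Fin.val_last]
  rw [mem_VPF_paren_iff]
  constructor
  · rintro ⟨g, hg, hαp, hgp⟩
    have hg_mem (c : Fin m) : p.removeNth g c ∈ Finset.Icc 1 m := by
      have hmem := hg.mem_Icc (Finset.mem_Icc.2 ⟨by omega, (α (p.succAbove c)).isLt⟩)
      have hne : g (p.succAbove c) ≠ g p := hg.injective.ne (p.succAbove_ne c)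
      rw [Finset.mem_Icc] at hmem ⊢
      rw [Fin.removeNth_apply]
      omega
    obtain ⟨hg', hlast⟩ := (isOutcome_iff_removeNth (f := fun c => (α c : ℕ) + 1) p
      (by simp) hαp hgp (fun c => (α _).isLt) hg_mem).1 hg
    exact ⟨(pref_eq p).1 hαp, _, hg', fun c hc => hlast c ((pref_eq _).2 hc)⟩
  · rintro ⟨hαp, g, hg, hlast⟩
    have hg_mem (c : Fin m) : g c ∈ Finset.Icc 1 m :=
      hg.mem_Icc (Finset.mem_Icc.2 ⟨by have := c.pos; omega, min_le_right _ _⟩)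
    have hpref := (pref_eq p).2 hαp
    refine ⟨p.insertNth (m + 1) g, ?_, hpref, by simp⟩
    rw [isOutcome_iff_removeNth (f := fun c => (α c : ℕ) + 1) (g := p.insertNth (m + 1) g) p
      (by simp) hpref (by simp) (fun c => (α _).isLt) (by simpa using hg_mem),
      Fin.removeNth_insertNth]
    exact ⟨hg, fun c hc => hlast c ((pref_eq _).1 hc)⟩

end Membership

theorem exists_option_eq_some_iff_mem {ι : Type*} {s : Set ι} (hs : s.Subsingleton) :
    ∃ o : Option ι, ∀ a, o = some a ↔ a ∈ s := by
  rcases hs.eq_empty_or_singleton with rfl | ⟨a, rfl⟩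
  · exact ⟨none, by simp⟩
  · exact ⟨some a, by simp [eq_comm]⟩

/-- Inserts a car preferring the new last spot at position `p`, so that the old car `c` becomes
`p.succAbove c`; the car in `o`, if any, is redirected to the new last spot. -/
def insertLast {m : ℕ} (p : Fin (m + 1)) (o : Option (Fin m)) (β : Fin m → Fin m) :
    Fin (m + 1) → Fin (m + 1) :=
  p.insertNth (Fin.last m) fun c => if o = some c then Fin.last m else (β c).castSucc

/-- The lists which `insertLast p o` turns into elements of `VPF_{m+1,(p+1)}`: there are none if
the redirected car would arrive before the inserted one, since it would then take the new last
spot. -/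
def insertLastDomain {m : ℕ} (p : Fin (m + 1)) : Option (Fin m) → Finset (Fin m → Fin m)
  | none => VPF m
  | some j => if p ≤ j.castSucc then VPF_paren m (j + 1) else ∅

section InsertLast

variable {m : ℕ} {p : Fin (m + 1)} {o o' : Option (Fin m)} {β β' : Fin m → Fin m}

theorem insertLast_apply_self : insertLast p o β p = Fin.last m := by
  simp [insertLast]

theorem removeNth_insertLast :
    p.removeNth (insertLast p o β) =
      fun c => if o = some c then Fin.last m else (β c).castSucc := by
  simp [insertLast]

theorem removeNth_insertLast_eq_last_iff {c : Fin m} :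
    p.removeNth (insertLast p o β) c = Fin.last m ↔ o = some c := by
  simp [removeNth_insertLast, (Fin.castSucc_lt_last _).ne]

theorem min_removeNth_insertLast_add_one (hβ : ∀ j, o = some j → (β j : ℕ) + 1 = m) (c : Fin m) :
    min ((p.removeNth (insertLast p o β) c : ℕ) + 1) m = β c + 1 := by
  simp only [removeNth_insertLast]
  split_ifs with hc
  · simp [hβ c hc]
  · simp [Nat.succ_le_of_lt (β c).isLt]

theorem mem_insertLastDomain_iff :
    β ∈ insertLastDomain p o ↔
      ∃ g, IsOutcome m 1 ∅ (fun c => (β c : ℕ) + 1) g ∧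
        ∀ j, o = some j → (β j : ℕ) + 1 = m ∧ g j = m ∧ p ≤ j.castSucc := by
  cases o with
  | none => simp [insertLastDomain, VPF, mem_VPFk_iff]
  | some j => by_cases h : p ≤ j.castSucc <;> simp [insertLastDomain, mem_VPF_paren_iff, h]

theorem pref_add_one_eq_of_mem_insertLastDomain (hβ : β ∈ insertLastDomain p o) {j : Fin m}
    (hj : o = some j) : (β j : ℕ) + 1 = m := by
  obtain ⟨g, -, hg⟩ := mem_insertLastDomain_iff.1 hβ
  exact (hg j hj).1

theorem eq_and_eq_of_insertLast_eq (hβ : β ∈ insertLastDomain p o)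
    (hβ' : β' ∈ insertLastDomain p o') (h : insertLast p o β = insertLast p o' β') :
    o = o' ∧ β = β' := by
  constructor
  · refine Option.ext fun c => ?_
    rw [← removeNth_insertLast_eq_last_iff (p := p) (β := β), h,
      removeNth_insertLast_eq_last_iff]
  · funext c
    have hc := min_removeNth_insertLast_add_one (p := p)
      (fun _ => pref_add_one_eq_of_mem_insertLastDomain hβ) c
    rw [h, min_removeNth_insertLast_add_one
      fun _ => pref_add_one_eq_of_mem_insertLastDomain hβ'] at hc
    exact Fin.ext (Nat.succ_injective hc.symm)

theorem insertLast_mem_VPF_paren (hβ : β ∈ insertLastDomain p o) :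
    insertLast p o β ∈ VPF_paren (m + 1) (p + 1) := by
  obtain ⟨g, hg, ho⟩ := mem_insertLastDomain_iff.1 hβ
  rw [mem_VPF_paren_succ_iff]
  refine ⟨insertLast_apply_self, g, ?_, fun c hc =>
    (ho c (removeNth_insertLast_eq_last_iff.1 hc)).2⟩
  simpa only [min_removeNth_insertLast_add_one fun j hj => (ho j hj).1] using hg

theorem exists_insertLast_eq {α : Fin (m + 1) → Fin (m + 1)}
    (hα : α ∈ VPF_paren (m + 1) (p + 1)) :
    ∃ o, ∃ β ∈ insertLastDomain p o, insertLast p o β = α := by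
  obtain ⟨hαp, g, hg, hlast⟩ := mem_VPF_paren_succ_iff.1 hα
  obtain ⟨o, ho⟩ : ∃ o : Option (Fin m), ∀ c, o = some c ↔ p.removeNth α c = Fin.last m :=
    exists_option_eq_some_iff_mem (s := {c | p.removeNth α c = Fin.last m}) fun c hc d hd =>
      hg.injective ((hlast c hc).1.trans (hlast d hd).1.symm)
  let β (c : Fin m) : Fin m := ⟨min (p.removeNth α c) (m - 1), by have := c.pos; omega⟩
  have hβ (c : Fin m) : (β c : ℕ) + 1 = min ((p.removeNth α c : ℕ) + 1) m := by
    have := c.pos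
    simp only [β]
    omega
  refine ⟨o, β, mem_insertLastDomain_iff.2 ⟨g, by simpa only [hβ] using hg, fun j hj => ?_⟩, ?_⟩
  · have hj' := (ho j).1 hj
    exact ⟨by simp [hβ, hj'], hlast j hj'⟩
  · rw [insertLast, Fin.insertNth_eq_iff]
    refine ⟨hαp.symm, funext fun c => ?_⟩
    simp only [ho]
    split_ifs with hc
    · exact hc.symm
    · have := Fin.val_lt_last hc
      exact Fin.ext (by simp only [β, Fin.val_castSucc]; omega)

theorem card_VPF_paren_succ_eq_sum_ite (p : Fin (m + 1)) :
    (VPF_paren (m + 1) (p + 1)).card =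
      (VPF m).card + ∑ j : Fin m, if p ≤ j.castSucc then (VPF_paren m (j + 1)).card else 0 := by
  have hbij : (Finset.univ.sigma (insertLastDomain p)).card =
      (VPF_paren (m + 1) (p + 1)).card := by
    refine Finset.card_bij (fun x _ => insertLast p x.1 x.2) ?_ ?_ ?_
    · rintro ⟨o, β⟩ hβ
      exact insertLast_mem_VPF_paren (Finset.mem_sigma.1 hβ).2
    · rintro ⟨o, β⟩ hβ ⟨o', β'⟩ hβ' heq
      obtain ⟨rfl, rfl⟩ :=
        eq_and_eq_of_insertLast_eq (Finset.mem_sigma.1 hβ).2 (Finset.mem_sigma.1 hβ').2 heq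
      rfl
    · intro α hα
      obtain ⟨o, β, hβ, rfl⟩ := exists_insertLast_eq hα
      exact ⟨⟨o, β⟩, by simpa using hβ, rfl⟩
  rw [← hbij, Finset.card_sigma, Fintype.sum_option]
  simp only [insertLastDomain, apply_ite Finset.card, Finset.card_empty]

end InsertLast

theorem sum_univ_ite_le_castSucc {M : Type*} [AddCommMonoid M] {m : ℕ} (p : Fin (m + 1))
    (F : ℕ → M) :
    (∑ j : Fin m, if p ≤ j.castSucc then F (j + 1) else 0) =
      ∑ j ∈ Finset.Icc (p + 1 : ℕ) m, F j := by
  simp only [Fin.le_def, Fin.val_castSucc]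
  rw [Fin.sum_univ_eq_sum_range (fun j => if (p : ℕ) ≤ j then F (j + 1) else 0),
    ← Finset.sum_filter, Finset.range_eq_Ico, Finset.Ico_filter_le, Nat.zero_max,
    Finset.sum_Ico_add', Finset.Ico_add_one_right_eq_Icc]

theorem card_VPF_paren_succ {m i : ℕ} (hi : i ∈ Finset.Icc 1 (m + 1)) :
    (VPF_paren (m + 1) i).card = (VPF m).card + ∑ j ∈ Finset.Icc i m, (VPF_paren m j).card := by
  obtain ⟨hi1, him⟩ := Finset.mem_Icc.1 hi
  obtain ⟨i, rfl⟩ := Nat.exists_eq_add_of_le' hi1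
  rw [card_VPF_paren_succ_eq_sum_ite ⟨i, him⟩,
    sum_univ_ite_le_castSucc ⟨i, him⟩ fun j => (VPF_paren m j).card]

theorem sum_Icc_sum_Icc_eq_sum_nsmul {M : Type*} [AddCommMonoid M] (i m : ℕ) (F : ℕ → M) :
    ∑ j ∈ Finset.Icc i (m + 1), ∑ ℓ ∈ Finset.Icc j m, F ℓ =
      ∑ ℓ ∈ Finset.Icc i m, (ℓ + 1 - i) • F ℓ := by
  rw [Finset.sum_comm' (t' := Finset.Icc i m) (s' := fun ℓ => Finset.Icc i ℓ)
    (fun j ℓ => by simp only [Finset.mem_Icc]; omega)]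
  simp only [Finset.sum_const, Nat.card_Icc]

theorem vpf_paren_card_eq_general (m i : ℕ) (hi : i ∈ Finset.Icc 1 (m + 2)) :
    (VPF_paren (m + 2) i).card =
      (VPF (m + 1)).card + (m + 2 - i) * (VPF m).card
        + ∑ ℓ ∈ Finset.Icc i m, (ℓ + 1 - i) * (VPF_paren m ℓ).card := by
  have hstep : ∀ j ∈ Finset.Icc i (m + 1), (VPF_paren (m + 1) j).card =
      (VPF m).card + ∑ ℓ ∈ Finset.Icc j m, (VPF_paren m ℓ).card := fun j hj =>
    card_VPF_paren_succ (Finset.Icc_subset_Icc_left (Finset.mem_Icc.1 hi).1 hj)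
  calc
    (VPF_paren (m + 2) i).card
      = (VPF (m + 1)).card + ∑ j ∈ Finset.Icc i (m + 1), (VPF_paren (m + 1) j).card :=
        card_VPF_paren_succ hi
    _ = (VPF (m + 1)).card + ((m + 2 - i) * (VPF m).card
          + ∑ j ∈ Finset.Icc i (m + 1), ∑ ℓ ∈ Finset.Icc j m, (VPF_paren m ℓ).card) := by
        rw [Finset.sum_congr rfl hstep, Finset.sum_add_distrib, Finset.sum_const, Nat.card_Icc,
          smul_eq_mul]
    _ = _ := by
        simp only [sum_Icc_sum_Icc_eq_sum_nsmul, smul_eq_mul, add_assoc]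

/-- For every `n ≥ 4` and `i ∈ [n]`,
`|VPF_{n,(i)}| = |VPF_{n-1}| + (n-i)·|VPF_{n-2}| + ∑_{ℓ=i}^{n-2} (ℓ+1-i)·|VPF_{n-2,(ℓ)}|`. -/
theorem vpf_paren_card_eq (n : ℕ) (hn : 4 ≤ n) (i : ℕ) (hi : i ∈ Finset.Icc 1 n) :
    (VPF_paren n i).card =
      (VPF (n-1)).card + (n - i) * (VPF (n-2)).card
        + ∑ ℓ ∈ Finset.Icc i (n-2), (ℓ + 1 - i) * (VPF_paren (n-2) ℓ).card := by
  obtain ⟨m, rfl⟩ : ∃ m, n = m + 2 := ⟨n - 2, by omega⟩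
  exact vpf_paren_card_eq_general m i hi
end

section
/- Let VPF_n^↑ denote the set of non-decreasing vacillating parking functions of length n. Then |VPF_1^↑| = 1, |VPF_2^↑| = 3, and for every integer n ≥ 3, |VPF_n^↑| = 2·|VPF_{n-1}^↑| + |VPF_{n-2}^↑|. -/
/-- The set of non-decreasing vacillating parking functions of length `n`. -/
def VPFup (n : ℕ) : Finset (Fin n → Fin n) :=
  (VPF n).filter fun α => ∀ i j : Fin n, i ≤ j → α i ≤ α j

/-!
When the cars arrive in weakly increasing order of preference, an initial block `1, …, m` of
occupied spots can grow in three ways only: the next car prefers `m + 1` and parks there, it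
prefers `m` and is pushed forward to `m + 1`, or it prefers `m + 2` and the car after it, with the
same preference, is pushed back to `m + 1`. Any larger preference would leave spot `m + 1` empty
forever. Hence a nonempty block can be completed in `P_{n-m+1}` ways, where `P` denotes the Pell
numbers, and since the second move is not available to the empty block,
`|VPF_n^↑| = P_n + P_{n-1}` for `n ≥ 1`.
-/

open Finset

section ParkStep

variable {n k p s : ℕ} {occ : Finset ℕ}

theorem parkStep_of_notMem (h : p ∉ occ) : parkStep n k occ p = some p :=
  if_pos h

theorem mem_sdiff_of_parkStep_eq_some (hp : p ∈ Icc 1 n) (h : parkStep n k occ p = some s) :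
    s ∈ Icc 1 n \ occ := by
  rw [mem_Icc] at hp
  unfold parkStep at h
  grind

theorem spot_le_add_of_parkStep_eq_some (h : parkStep n k occ p = some s) : s ≤ p + k := by
  unfold parkStep at h
  grind

theorem pref_le_add_of_parkStep_eq_some (h : parkStep n k occ p = some s) : p ≤ s + k := by
  unfold parkStep at h
  grind

theorem parkStep_Icc_self {m : ℕ} (hm : 1 ≤ m) (hmn : m < n) :
    parkStep n 1 (Icc 1 m) m = some (m + 1) := by
  unfold parkStep
  grind

theorem parkStep_insert_Icc_add_two (n m : ℕ) :
    parkStep n 1 (insert (m + 2) (Icc 1 m)) (m + 2) = some (m + 1) := by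
  simp [parkStep]

theorem isSome_parkAssign_cons {l : List ℕ} :
    (parkAssign n k occ (p :: l)).isSome ↔
      ∃ s, parkStep n k occ p = some s ∧ (parkAssign n k (insert s occ) l).isSome := by
  cases h : parkStep n k occ p <;> simp [parkAssign, h]

end ParkStep

/-- `IsFilling n k occ l` says that `l` is a weakly increasing list of preferences in `[n]` whose
cars, arriving when the spots of `occ` are taken, all park under the `k`-vacillating rule and bring
the number of taken spots to `n`. For `occ = ∅` and `k = 1` these are the members of `VPF_n^↑`. -/
structure IsFilling (n k : ℕ) (occ : Finset ℕ) (l : List ℕ) : Prop where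
  length_add_card : l.length + #occ = n
  pairwise_le : l.Pairwise (· ≤ ·)
  pref_mem : ∀ p ∈ l, p ∈ Icc 1 n
  isSome_parkAssign : (parkAssign n k occ l).isSome

section IsFilling

variable {n k m p s : ℕ} {occ : Finset ℕ} {l : List ℕ}

theorem isFilling_nil : IsFilling n k occ [] ↔ #occ = n :=
  ⟨fun h => by simpa using h.length_add_card,
    fun h => ⟨by simpa using h, List.Pairwise.nil, by simp, by simp [parkAssign]⟩⟩

theorem isFilling_cons :
    IsFilling n k occ (p :: l) ↔ p ∈ Icc 1 n ∧ (∀ q ∈ l, p ≤ q) ∧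
      ∃ s, parkStep n k occ p = some s ∧ IsFilling n k (insert s occ) l := by
  have card_insert_spot {s : ℕ} (hp : p ∈ Icc 1 n) (hs : parkStep n k occ p = some s) :
      #(insert s occ) = #occ + 1 :=
    card_insert_of_notMem (mem_sdiff.1 (mem_sdiff_of_parkStep_eq_some hp hs)).2
  constructor
  · rintro ⟨hlen, hsort, hmem, hpark⟩
    rw [List.pairwise_cons] at hsort
    rw [List.forall_mem_cons] at hmem
    obtain ⟨s, hs, hpark⟩ := isSome_parkAssign_cons.1 hpark
    refine ⟨hmem.1, hsort.1, s, hs, ?_, hsort.2, hmem.2, hpark⟩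
    rw [card_insert_spot hmem.1 hs, ← hlen, List.length_cons]
    ring
  · rintro ⟨hp, hle, s, hs, h⟩
    refine ⟨?_, List.pairwise_cons.2 ⟨hle, h.pairwise_le⟩, List.forall_mem_cons.2 ⟨hp, h.pref_mem⟩,
      isSome_parkAssign_cons.2 ⟨s, hs, h.isSome_parkAssign⟩⟩
    rw [← h.length_add_card, card_insert_spot hp hs, List.length_cons]
    ring

-- The cars take every free spot, in particular `s`, and no car parks more than `k` spots away from
-- its preference.
theorem IsFilling.exists_pref_le_add (h : IsFilling n k occ l) (hocc : occ ⊆ Icc 1 n)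
    (hs : s ∈ Icc 1 n \ occ) : ∃ p ∈ l, p ≤ s + k := by
  induction l generalizing occ with
  | nil =>
    have hfull : occ = Icc 1 n := eq_of_subset_of_card_le hocc (by simp [isFilling_nil.1 h])
    simp [hfull] at hs
  | cons p l ih =>
    obtain ⟨hp, -, t, ht, h⟩ := isFilling_cons.1 h
    obtain rfl | hst := eq_or_ne s t
    · exact ⟨p, List.mem_cons_self, pref_le_add_of_parkStep_eq_some ht⟩
    · have htn : t ∈ Icc 1 n := (mem_sdiff.1 (mem_sdiff_of_parkStep_eq_some hp ht)).1
      obtain ⟨q, hq, hqs⟩ := ih h (insert_subset htn hocc) (by grind)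
      exact ⟨q, List.mem_cons_of_mem p hq, hqs⟩

theorem IsFilling.lt_pref_add (h : IsFilling n k (Icc 1 m) l) (hp : p ∈ l) : m < p + k := by
  cases l with
  | nil => simp at hp
  | cons q l =>
    obtain ⟨hq, hle, s, hs, -⟩ := isFilling_cons.1 h
    have hqp : q ≤ p := by grind
    have hms : m < s := by grind [mem_sdiff_of_parkStep_eq_some hq hs]
    linarith [spot_le_add_of_parkStep_eq_some hs]

theorem IsFilling.length_add (h : IsFilling n k (Icc 1 m) l) : l.length + m = n := by
  simpa using h.length_add_card

theorem isFilling_Icc_cons_of_parkStep (hp : p ∈ Icc 1 n) (hpm : p ≤ m + 1)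
    (hs : parkStep n 1 (Icc 1 m) p = some (m + 1)) :
    IsFilling n 1 (Icc 1 m) (p :: l) ↔ IsFilling n 1 (Icc 1 (m + 1)) l := by
  have hblock : insert (m + 1) (Icc 1 m) = Icc 1 (m + 1) :=
    insert_Icc_right_eq_Icc_add_one (by lia)
  rw [isFilling_cons, hs]
  simp only [Option.some.injEq, exists_eq_left', hblock, hp, true_and, and_iff_right_iff_imp]
  intro h q hq
  linarith [h.lt_pref_add hq]

theorem isFilling_Icc_self_cons (hm : 1 ≤ m) (hmn : m < n) :
    IsFilling n 1 (Icc 1 m) (m :: l) ↔ IsFilling n 1 (Icc 1 (m + 1)) l :=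
  isFilling_Icc_cons_of_parkStep (by grind) (by lia) (parkStep_Icc_self hm hmn)

theorem isFilling_Icc_add_one_cons (hmn : m < n) :
    IsFilling n 1 (Icc 1 m) ((m + 1) :: l) ↔ IsFilling n 1 (Icc 1 (m + 1)) l :=
  isFilling_Icc_cons_of_parkStep (by grind) le_rfl (parkStep_of_notMem (by simp))

theorem isFilling_Icc_add_two_cons_cons :
    IsFilling n 1 (Icc 1 m) ((m + 2) :: (m + 2) :: l) ↔ IsFilling n 1 (Icc 1 (m + 2)) l := by
  have hblock : insert (m + 1) (insert (m + 2) (Icc 1 m)) = Icc 1 (m + 2) := by grind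
  have hstep : parkStep n 1 (Icc 1 m) (m + 2) = some (m + 2) := parkStep_of_notMem (by simp)
  simp only [isFilling_cons, hstep, parkStep_insert_Icc_add_two, Option.some.injEq,
    exists_eq_left', hblock]
  constructor
  · tauto
  · intro h
    have hmem : m + 2 ∈ Icc 1 n := by grind [h.length_add]
    have hle (q : ℕ) (hq : q ∈ l) : m + 2 ≤ q := Nat.lt_succ_iff.1 (h.lt_pref_add hq)
    simpa [hmem, h] using hle

theorem IsFilling.exists_tail_eq_cons (h : IsFilling n 1 (Icc 1 m) ((m + 2) :: l)) :
    ∃ l', l = (m + 2) :: l' := by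
  obtain ⟨hmem, hle, s, hs, h⟩ := isFilling_cons.1 h
  obtain rfl : m + 2 = s := by simpa [parkStep] using hs
  obtain ⟨q, hq, hqm⟩ := h.exists_pref_le_add (s := m + 1) (by grind) (by grind)
  cases l with
  | nil => simp at hq
  | cons r l =>
    have hrq : r ≤ q := by grind [isFilling_cons]
    have hmr : m + 2 ≤ r := hle r List.mem_cons_self
    exact ⟨l, by rw [show r = m + 2 by lia]⟩

theorem IsFilling.head_mem_Icc (h : IsFilling n 1 (Icc 1 m) (p :: l)) : p ∈ Icc m (m + 2) := by
  have hlen := h.length_add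
  rw [List.length_cons] at hlen
  have hmp := h.lt_pref_add List.mem_cons_self
  obtain ⟨q, hq, hqm⟩ := h.exists_pref_le_add (s := m + 1) (by grind) (by grind)
  have hpq : p ≤ q := by grind [isFilling_cons]
  grind

end IsFilling

/-- The weakly increasing lists of preferences that complete the block `1, …, m` of taken spots to
the whole street `1, …, n`. -/
def fillings (n m : ℕ) : Set (List ℕ) := {l | IsFilling n 1 (Icc 1 m) l}

section Fillings

variable {n m : ℕ}

theorem fillings_self (n : ℕ) : fillings n n = {[]} := by
  ext l
  refine ⟨fun h => ?_, ?_⟩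
  · have := h.length_add
    exact List.eq_nil_of_length_eq_zero (by lia)
  · rintro rfl
    exact isFilling_nil.2 (by simp)

theorem fillings_of_lt (h : n < m) : fillings n m = ∅ :=
  Set.eq_empty_of_forall_notMem fun l hl => by
    have := hl.length_add
    lia

theorem fillings_eq_union (hmn : m < n) :
    fillings n m = (if m = 0 then ∅ else (m :: ·) '' fillings n (m + 1)) ∪
      (((m + 1) :: ·) '' fillings n (m + 1) ∪ ((m + 2) :: (m + 2) :: ·) '' fillings n (m + 2)) := by
  ext l
  constructor
  · intro h
    cases l with
    | nil => exact absurd h.length_add (by simpa using hmn.ne)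
    | cons p l =>
      obtain ⟨hmp, hpm⟩ := mem_Icc.1 h.head_mem_Icc
      obtain rfl | rfl | rfl : p = m ∨ p = m + 1 ∨ p = m + 2 := by lia
      · have hp : 1 ≤ p := (mem_Icc.1 (h.pref_mem p List.mem_cons_self)).1
        rw [if_neg (by lia)]
        exact Or.inl ⟨l, (isFilling_Icc_self_cons hp hmn).1 h, rfl⟩
      · exact Or.inr (Or.inl ⟨l, (isFilling_Icc_add_one_cons hmn).1 h, rfl⟩)
      · obtain ⟨l, rfl⟩ := h.exists_tail_eq_cons
        exact Or.inr (Or.inr ⟨l, isFilling_Icc_add_two_cons_cons.1 h, rfl⟩)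
  · rintro (h | ⟨l, h, rfl⟩ | ⟨l, h, rfl⟩)
    · split_ifs at h with hm
      · exact absurd h (Set.notMem_empty l)
      · obtain ⟨l, h, rfl⟩ := h
        exact (isFilling_Icc_self_cons (Nat.pos_of_ne_zero hm) hmn).2 h
    · exact (isFilling_Icc_add_one_cons hmn).2 h
    · exact isFilling_Icc_add_two_cons_cons.2 h

theorem encard_fillings_eq_add (hmn : m < n) :
    (fillings n m).encard = (if m = 0 then 0 else (fillings n (m + 1)).encard) +
      ((fillings n (m + 1)).encard + (fillings n (m + 2)).encard) := by
  have cons_cons_injective : Function.Injective fun l => (m + 2) :: (m + 2) :: l :=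
    List.cons_injective.comp List.cons_injective
  rw [fillings_eq_union hmn, Set.encard_union_eq, Set.encard_union_eq, apply_ite Set.encard,
    Set.encard_empty, List.cons_injective.encard_image, List.cons_injective.encard_image,
    cons_cons_injective.encard_image]
  · rw [Set.disjoint_left]
    grind
  · rw [Set.disjoint_left]
    grind

/-- The Pell numbers `0, 1, 2, 5, 12, …`, which count the completions of a nonempty block. -/
def pellNumber : ℕ → ℕ
  | 0 => 0
  | 1 => 1
  | r + 2 => 2 * pellNumber (r + 1) + pellNumber r

theorem encard_fillings_of_pos (r : ℕ) (hm : 0 < m) (hr : m + r = n + 1) :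
    (fillings n m).encard = pellNumber r := by
  induction r using pellNumber.induct generalizing m with
  | case1 => simp [fillings_of_lt (show n < m by lia), pellNumber]
  | case2 =>
    obtain rfl : m = n := by lia
    simp [fillings_self, pellNumber]
  | case3 r ih₁ ih₀ =>
    rw [encard_fillings_eq_add (by lia), if_neg hm.ne', ih₁ (by lia) (by lia),
      ih₀ (by lia) (by lia), pellNumber]
    push_cast
    ring

theorem encard_fillings_succ_zero (n : ℕ) :
    (fillings (n + 1) 0).encard = pellNumber (n + 1) + pellNumber n := by
  rw [encard_fillings_eq_add n.succ_pos, if_pos rfl, zero_add,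
    encard_fillings_of_pos (n + 1) (by lia) (by lia), encard_fillings_of_pos n (by lia) (by lia)]

end Fillings

section PrefList

variable {m n : ℕ}

theorem prefList_injective : Function.Injective (prefList (m := m) (n := n)) := fun α β h =>
  funext fun i => Fin.ext (by simpa using congrFun (List.ofFn_injective h) i)

theorem pairwise_le_prefList {α : Fin m → Fin n} :
    (prefList α).Pairwise (· ≤ ·) ↔ Monotone α := by
  rw [← List.sortedLE_iff_pairwise, prefList, List.sortedLE_ofFn_iff]
  simp [Monotone]

theorem mem_range_prefList {l : List ℕ} :
    l ∈ Set.range (prefList (m := m) (n := n)) ↔ l.length = m ∧ ∀ p ∈ l, p ∈ Icc 1 n := by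
  constructor
  · rintro ⟨α, rfl⟩
    simp only [prefList, List.length_ofFn, List.forall_mem_ofFn_iff, mem_Icc, true_and]
    lia
  · induction l using List.ofFnRec with | _ k f =>
    simp only [List.length_ofFn, List.forall_mem_ofFn_iff, mem_Icc]
    rintro ⟨rfl, hf⟩
    refine ⟨fun i => ⟨f i - 1, by grind⟩, ?_⟩
    simp [prefList, Nat.sub_add_cancel (hf _).1]

theorem mem_VPFup_iff_isFilling {α : Fin n → Fin n} :
    α ∈ VPFup n ↔ IsFilling n 1 ∅ (prefList α) := by
  obtain ⟨hlen, hmem⟩ := mem_range_prefList.1 (Set.mem_range_self α)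
  have hmono : (∀ i j : Fin n, i ≤ j → α i ≤ α j) ↔ (prefList α).Pairwise (· ≤ ·) :=
    pairwise_le_prefList.symm
  simp only [VPFup, VPF, VPFk, mem_filter, mem_univ, true_and, hmono]
  exact ⟨fun ⟨hpark, hsort⟩ => ⟨by simpa using hlen, hsort, hmem, hpark⟩,
    fun h => ⟨h.isSome_parkAssign, h.pairwise_le⟩⟩

theorem image_prefList_VPFup (n : ℕ) :
    prefList '' (VPFup n : Set (Fin n → Fin n)) = fillings n 0 := by
  ext l
  constructor
  · rintro ⟨α, hα, rfl⟩
    exact mem_VPFup_iff_isFilling.1 hα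
  · intro h
    obtain ⟨α, rfl⟩ := mem_range_prefList.2 ⟨h.length_add, h.pref_mem⟩
    exact ⟨α, mem_VPFup_iff_isFilling.2 h, rfl⟩

theorem card_VPFup_succ (n : ℕ) : #(VPFup (n + 1)) = pellNumber (n + 1) + pellNumber n := by
  have h := encard_fillings_succ_zero n
  rw [← image_prefList_VPFup, prefList_injective.encard_image,
    Set.encard_coe_eq_coe_finsetCard] at h
  exact_mod_cast h

end PrefList

/-- `|VPF_1^↑| = 1`, `|VPF_2^↑| = 3`, and for `n ≥ 3`,
`|VPF_n^↑| = 2·|VPF_{n-1}^↑| + |VPF_{n-2}^↑|`. -/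
theorem vpfup_recurrence :
    (VPFup 1).card = 1 ∧ (VPFup 2).card = 3 ∧
      ∀ n : ℕ, 3 ≤ n →
        (VPFup n).card = 2 * (VPFup (n-1)).card + (VPFup (n-2)).card := by
  refine ⟨card_VPFup_succ 0, card_VPFup_succ 1, fun n hn => ?_⟩
  obtain ⟨n, rfl⟩ := Nat.exists_eq_add_of_le' hn
  calc #(VPFup (n + 3)) = pellNumber (n + 3) + pellNumber (n + 2) := card_VPFup_succ (n + 2)
    _ = 2 * (pellNumber (n + 2) + pellNumber (n + 1)) + (pellNumber (n + 1) + pellNumber n) := by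
      simp only [pellNumber]
      ring
    _ = 2 * #(VPFup (n + 2)) + #(VPFup (n + 1)) := by
      rw [card_VPFup_succ (n + 1), card_VPFup_succ n]
end
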